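/- The limit as r → 0⁺ of (π/2 − φ(r))/r³ equals 2/3; equivalently, φ(r) = π/2 − (2/3)r³ + o(r³) as r → 0⁺. -/

import Mathlib

/-!
The constant terms in the derivative of `φ` cancel: with `s = √(1 - r²)` and `-1 < r < 1`,
`φ'(r) = -1/s + s - r²/s = -2r²/s` (`hasDerivAt_phi`). Since `φ(0) = π/2`, L'Hôpital's rule
reduces the limit to that of `(2r²/s) / (3r²) = 2/(3s)`, which tends to `2/3` by continuity.
-/

noncomputable section

/-- The profile function `φ(r) = arccos r + r √(1 - r²)`. -/
def phi (r : ℝ) : ℝ := Real.arccos r + r * Real.sqrt (1 - r ^ 2)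

theorem hasDerivAt_phi {r : ℝ} (h₀ : -1 < r) (h₁ : r < 1) :
    HasDerivAt phi (-(2 * r ^ 2 / Real.sqrt (1 - r ^ 2))) r := by
  have hpos : 0 < 1 - r ^ 2 := by nlinarith
  have hs : 0 < Real.sqrt (1 - r ^ 2) := Real.sqrt_pos.2 hpos
  have hsq : Real.sqrt (1 - r ^ 2) ^ 2 = 1 - r ^ 2 := Real.sq_sqrt hpos.le
  have hin : HasDerivAt (fun x : ℝ => 1 - x ^ 2) (-(2 * r)) r := by
    simpa using (hasDerivAt_pow 2 r).const_sub 1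
  have h := (Real.hasDerivAt_arccos h₀.ne' h₁.ne).add
    ((hasDerivAt_id r).mul (hin.sqrt hpos.ne'))
  refine h.congr_deriv ?_
  simp only [id]
  field_simp
  rw [hsq]
  ring

theorem continuous_phi : Continuous phi := by
  unfold phi
  exact Real.continuous_arccos.add (by fun_prop)

/-- `(π/2 - φ(r))/r³ → 2/3` as `r → 0⁺`, i.e. `φ(r) = π/2 - (2/3) r³ + o(r³)`. -/
theorem phi_expansion_at_zero :
    Filter.Tendsto (fun r : ℝ => (Real.pi / 2 - phi r) / r ^ 3)
      (nhdsWithin 0 (Set.Ioi 0)) (nhds (2 / 3)) := by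
  have hmem : ∀ᶠ r : ℝ in nhdsWithin 0 (Set.Ioi 0), r ∈ Set.Ioo (0 : ℝ) 1 :=
    Ioo_mem_nhdsGT one_pos
  refine HasDerivAt.lhopital_zero_nhdsGT
    (f' := fun r => 2 * r ^ 2 / Real.sqrt (1 - r ^ 2)) (g' := fun r => 3 * r ^ 2)
    ?_ ?_ ?_ ?_ ?_ ?_
  · filter_upwards [hmem] with r hr
    simpa using (hasDerivAt_phi (by linarith [hr.1]) hr.2).const_sub (Real.pi / 2)
  · exact Filter.Eventually.of_forall fun r => by simpa using hasDerivAt_pow 3 r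
  · filter_upwards [hmem] with r hr
    have := hr.1
    positivity
  · have h : Continuous fun r => Real.pi / 2 - phi r := continuous_const.sub continuous_phi
    have h0 := h.tendsto 0
    simp only [phi, Real.arccos_zero, zero_mul, add_zero, sub_self] at h0
    exact h0.mono_left nhdsWithin_le_nhds
  · have h : Continuous fun r : ℝ => r ^ 3 := by fun_prop
    have h0 := h.tendsto 0
    norm_num at h0
    exact h0.mono_left nhdsWithin_le_nhds
  · have h : ContinuousAt (fun r : ℝ => 2 / (3 * Real.sqrt (1 - r ^ 2))) 0 :=
      ContinuousAt.div (by fun_prop) (by fun_prop) (by norm_num)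
    have h0 : Filter.Tendsto (fun r : ℝ => 2 / (3 * Real.sqrt (1 - r ^ 2)))
        (nhds 0) (nhds (2 / 3)) := by simpa [ContinuousAt] using h
    refine (h0.mono_left nhdsWithin_le_nhds).congr' ?_
    filter_upwards [hmem] with r hr
    have hr0 : r ≠ 0 := hr.1.ne'
    have hs : Real.sqrt (1 - r ^ 2) ≠ 0 :=
      (Real.sqrt_pos.2 (by nlinarith [hr.1, hr.2])).ne'
    field_simp
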